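/- arXiv:1707.01528 — 2 statements merged into one kernel-verified Lean document; each statement's English description precedes it below -/
import Mathlib

section
/- Product identity for S' and S'' (formula (n6)): Let τ lie in the complex upper half-plane and let u ∈ ℂ be such that θ₁(u,τ)·θ₄(u,τ) ≠ 0 and θ₁(u, τ/2) ≠ 0. Then S'(u,τ)·S''(u,τ) = (1/2)·℘₁'(u, τ/2), where ℘₁'(u,σ) = ∂_u ℘₁(u,σ). -/
open Complex

/-- Jacobi theta function θ₁(u,τ). -/
noncomputable def theta1 (u τ : ℂ) : ℂ :=
  -∑' k : ℤ, Complex.exp ((Real.pi : ℂ) * Complex.I * τ * ((k : ℂ) + 1/2)^2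
      + 2 * (Real.pi : ℂ) * Complex.I * (u + 1/2) * ((k : ℂ) + 1/2))

/-- Jacobi theta function θ₂(u,τ). -/
noncomputable def theta2 (u τ : ℂ) : ℂ :=
  ∑' k : ℤ, Complex.exp ((Real.pi : ℂ) * Complex.I * τ * ((k : ℂ) + 1/2)^2
      + 2 * (Real.pi : ℂ) * Complex.I * u * ((k : ℂ) + 1/2))

/-- Jacobi theta function θ₃(u,τ). -/
noncomputable def theta3 (u τ : ℂ) : ℂ :=
  ∑' k : ℤ, Complex.exp ((Real.pi : ℂ) * Complex.I * τ * (k : ℂ)^2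
      + 2 * (Real.pi : ℂ) * Complex.I * u * (k : ℂ))

/-- Jacobi theta function θ₄(u,τ). -/
noncomputable def theta4 (u τ : ℂ) : ℂ :=
  ∑' k : ℤ, Complex.exp ((Real.pi : ℂ) * Complex.I * τ * (k : ℂ)^2
      + 2 * (Real.pi : ℂ) * Complex.I * (u + 1/2) * (k : ℂ))

/-- ζ_a(u,τ) = θ_a'(u,τ)/θ_a(u,τ). -/
noncomputable def zeta1 (u τ : ℂ) : ℂ := deriv (fun v => theta1 v τ) u / theta1 u τ
noncomputable def zeta2 (u τ : ℂ) : ℂ := deriv (fun v => theta2 v τ) u / theta2 u τ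
noncomputable def zeta3 (u τ : ℂ) : ℂ := deriv (fun v => theta3 v τ) u / theta3 u τ
noncomputable def zeta4 (u τ : ℂ) : ℂ := deriv (fun v => theta4 v τ) u / theta4 u τ

/-- ℘_a(u,τ) = −∂_u ζ_a(u,τ). -/
noncomputable def wp1 (u τ : ℂ) : ℂ := -deriv (fun v => zeta1 v τ) u
noncomputable def wp2 (u τ : ℂ) : ℂ := -deriv (fun v => zeta2 v τ) u
noncomputable def wp1' (u τ : ℂ) : ℂ := deriv (fun v => wp1 v τ) u
noncomputable def wp2' (u τ : ℂ) : ℂ := deriv (fun v => wp2 v τ) u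

/-- S'(u,τ) = ζ₁(u,τ) − ζ₄(u,τ). -/
noncomputable def Sp (u τ : ℂ) : ℂ := zeta1 u τ - zeta4 u τ
/-- S''(u,τ) = ∂_u S'(u,τ). -/
noncomputable def Spp (u τ : ℂ) : ℂ := deriv (fun v => Sp v τ) u
/-- S'''(u,τ) = ∂_u S''(u,τ). -/
noncomputable def Sppp (u τ : ℂ) : ℂ := deriv (fun v => Spp v τ) u

/-- Partial derivative in the j-th coordinate of a ℂ-valued function on ℝ^N. -/
noncomputable def pdC {N : ℕ} (j : Fin N) (f : (Fin N → ℝ) → ℂ) (x : Fin N → ℝ) : ℂ :=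
  fderiv ℝ f x (Pi.single j 1)

/-- Partial derivative in the j-th coordinate of an ℝ-valued function on ℝ^d. -/
noncomputable def pd {d : ℕ} (j : Fin d) (f : (Fin d → ℝ) → ℝ) (x : Fin d → ℝ) : ℝ :=
  fderiv ℝ f x (Pi.single j 1)

/-!
Write `S' = (log (θ₁ / θ₄))'` as a Wronskian divided by `θ₁ θ₄`. Summing over the lattice points
`(m + n, m - n)` gives the duplication formula
`2 θ₁(x + y, 2τ) θ₄(x - y, 2τ) = θ₁(x, τ) θ₂(y, τ) + θ₂(x, τ) θ₁(y, τ)`, whose first-order expansion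
at `y = 0` identifies both, so that `S'(u, 2τ) = (θ₁'(0) / θ₂(0)) (θ₂(u) / θ₁(u))` with all theta
functions on the right taken at `τ`. The second-order expansion of
`θ₁(x + y) θ₁(x - y) θ₂(0)² = θ₁(x)² θ₂(y)² - θ₂(x)² θ₁(y)²` shows that the square of this function
is `℘₁(u, τ)` up to an additive constant. Differentiate in `u`.
-/

open scoped Real Topology

section Calculus

variable {𝕜 : Type*} [NontriviallyNormedField 𝕜]

theorem odd_deriv_of_even {E : Type*} [NormedAddCommGroup E] [NormedSpace 𝕜 E] {f : 𝕜 → E}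
    (hf : f.Even) : (deriv f).Odd := fun x => by
  have h := deriv_comp_neg f x
  rw [funext hf] at h
  rw [h, neg_neg]

theorem deriv_logDeriv {𝕜' : Type*} [NontriviallyNormedField 𝕜'] [NormedAlgebra 𝕜 𝕜']
    {f : 𝕜 → 𝕜'} {x : 𝕜} (hf : DifferentiableAt 𝕜 f x) (hf' : DifferentiableAt 𝕜 (deriv f) x)
    (hx : f x ≠ 0) :
    deriv (logDeriv f) x = (iteratedDeriv 2 f x * f x - deriv f x ^ 2) / f x ^ 2 := by
  rw [iteratedDeriv_succ, iteratedDeriv_one, sq (deriv f x)]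
  exact deriv_fun_div hf' hf hx

variable {A : Type*}

theorem deriv_comp_add_mul_comp_sub [NormedRing A] [NormedAlgebra 𝕜 A] {f g : 𝕜 → A} {x : 𝕜}
    (hf : DifferentiableAt 𝕜 f x) (hg : DifferentiableAt 𝕜 g x) :
    deriv (fun y => f (x + y) * g (x - y)) 0 = deriv f x * g x - f x * deriv g x := by
  have hadd : HasDerivAt (fun y => f (x + y)) (deriv f x) 0 :=
    .comp_const_add x 0 (by rwa [add_zero, hasDerivAt_deriv_iff])
  have hsub : HasDerivAt (fun y => g (x - y)) (-deriv g x) 0 :=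
    .comp_const_sub x 0 (by rwa [sub_zero, hasDerivAt_deriv_iff])
  simpa only [add_zero, sub_zero, mul_neg, ← sub_eq_add_neg] using (hadd.fun_mul hsub).deriv

variable [NormedCommRing A] [NormedAlgebra 𝕜 A] {f g : 𝕜 → A}

theorem iteratedDeriv_two_fun_mul {x : 𝕜} (hf : ContDiffAt 𝕜 2 f x) (hg : ContDiffAt 𝕜 2 g x) :
    iteratedDeriv 2 (fun y => f y * g y) x =
      iteratedDeriv 2 f x * g x + 2 * (deriv f x * deriv g x) + f x * iteratedDeriv 2 g x := by
  rw [iteratedDeriv_fun_mul hf hg]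
  simp only [Nat.reduceAdd, Finset.sum_range_succ, Finset.range_one, Finset.sum_singleton,
    Nat.choose_zero_right, Nat.cast_one, iteratedDeriv_zero, one_mul, tsub_zero,
    Nat.choose_succ_self_right, Nat.cast_ofNat, iteratedDeriv_one, Nat.add_one_sub_one,
    Nat.choose_self, tsub_self]
  ring

theorem iteratedDeriv_two_fun_sq {x : 𝕜} (hf : ContDiffAt 𝕜 2 f x) :
    iteratedDeriv 2 (fun y => f y ^ 2) x = 2 * (f x * iteratedDeriv 2 f x + deriv f x ^ 2) := by
  simp only [sq]
  rw [iteratedDeriv_two_fun_mul hf hf]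
  ring

theorem iteratedDeriv_two_comp_add_mul_comp_sub (hf : ContDiff 𝕜 2 f) (x : 𝕜) :
    iteratedDeriv 2 (fun y => f (x + y) * f (x - y)) 0 =
      2 * (iteratedDeriv 2 f x * f x - deriv f x ^ 2) := by
  rw [iteratedDeriv_two_fun_mul (by fun_prop) (by fun_prop), iteratedDeriv_comp_const_add,
    iteratedDeriv_comp_const_sub, deriv_comp_const_add, deriv_comp_const_sub]
  simp only [add_zero, sub_zero, neg_one_sq, one_smul]
  ring

end Calculus

section Duplication

theorem tsum_add_sub_eq_tsum {M : Type*} [AddCommMonoid M] [TopologicalSpace M]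
    {f : ℤ × ℤ → M} (hf : ∀ p : ℤ × ℤ, Odd (p.1 + p.2) → f p = 0) :
    ∑' p : ℤ × ℤ, f (p.1 + p.2, p.1 - p.2) = ∑' p, f p := by
  have hinj : Function.Injective fun p : ℤ × ℤ => (p.1 + p.2, p.1 - p.2) := by
    rintro ⟨m, n⟩ ⟨m', n'⟩ h
    simp only [Prod.mk.injEq] at h ⊢
    omega
  refine hinj.tsum_eq fun ⟨k, l⟩ hkl => ?_
  obtain ⟨m, hm⟩ := Int.not_odd_iff_even.mp (mt (hf (k, l)) hkl)
  exact ⟨(m, k - m), by simp only [Prod.mk.injEq]; omega⟩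

theorem jacobiTheta₂_term_add_half (k : ℤ) (z τ : ℂ) :
    jacobiTheta₂_term k (z + 1 / 2) τ = (-1) ^ k * jacobiTheta₂_term k z τ := by
  rw [jacobiTheta₂_term, jacobiTheta₂_term, ← exp_pi_mul_I, ← exp_int_mul, ← Complex.exp_add]
  ring_nf

theorem jacobiTheta₂_term_add_mul_jacobiTheta₂_term_sub (m n : ℤ) (a b τ : ℂ) :
    jacobiTheta₂_term (m + n) a τ * jacobiTheta₂_term (m - n) b τ =
      jacobiTheta₂_term m (a + b) (2 * τ) * jacobiTheta₂_term n (a - b) (2 * τ) := by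
  simp only [jacobiTheta₂_term, ← Complex.exp_add]
  push_cast
  ring_nf

theorem jacobiTheta₂_mul_add_jacobiTheta₂_mul (a b : ℂ) {τ : ℂ} (hτ : 0 < τ.im) :
    jacobiTheta₂ a τ * jacobiTheta₂ b τ +
        jacobiTheta₂ (a + 1 / 2) τ * jacobiTheta₂ (b + 1 / 2) τ =
      2 * (jacobiTheta₂ (a + b) (2 * τ) * jacobiTheta₂ (a - b) (2 * τ)) := by
  have summable {σ : ℂ} (hσ : 0 < σ.im) (z : ℂ) : Summable fun k => ‖jacobiTheta₂_term k z σ‖ :=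
    ((summable_jacobiTheta₂_term_iff z σ).mpr hσ).norm
  have mul_eq_tsum {σ : ℂ} (hσ : 0 < σ.im) (z w : ℂ) : jacobiTheta₂ z σ * jacobiTheta₂ w σ =
      ∑' p : ℤ × ℤ, jacobiTheta₂_term p.1 z σ * jacobiTheta₂_term p.2 w σ :=
    tsum_mul_tsum_of_summable_norm (summable hσ z) (summable hσ w)
  have summable_mul (z w : ℂ) := summable_mul_of_summable_norm (summable hτ z) (summable hτ w)
  have h2τ : 0 < (2 * τ).im := by simpa using hτ
  have sign (p : ℤ × ℤ) :
      jacobiTheta₂_term p.1 a τ * jacobiTheta₂_term p.2 b τ +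
          jacobiTheta₂_term p.1 (a + 1 / 2) τ * jacobiTheta₂_term p.2 (b + 1 / 2) τ =
        (1 + (-1) ^ (p.1 + p.2)) * (jacobiTheta₂_term p.1 a τ * jacobiTheta₂_term p.2 b τ) := by
    rw [jacobiTheta₂_term_add_half, jacobiTheta₂_term_add_half, zpow_add₀ (by norm_num)]
    ring
  rw [mul_eq_tsum hτ, mul_eq_tsum hτ, mul_eq_tsum h2τ,
    ← (summable_mul _ _).tsum_add (summable_mul _ _), ← tsum_mul_left, tsum_congr sign,
    ← tsum_add_sub_eq_tsum fun p hp => by rw [hp.neg_one_zpow, add_neg_cancel, zero_mul]]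
  refine tsum_congr fun ⟨m, n⟩ => ?_
  have even_add : Even (m + n + (m - n)) := ⟨m, by ring⟩
  rw [even_add.neg_one_zpow, jacobiTheta₂_term_add_mul_jacobiTheta₂_term_sub, one_add_one_eq_two]

end Duplication

theorem theta1_eq_neg_theta2 (u τ : ℂ) : theta1 u τ = -theta2 (u + 1 / 2) τ := rfl

theorem theta2_eq_jacobiTheta₂ (u τ : ℂ) :
    theta2 u τ = cexp (π * I * τ / 4 + π * I * u) * jacobiTheta₂ (u + τ / 2) τ := by
  rw [theta2, jacobiTheta₂, ← tsum_mul_left]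
  refine tsum_congr fun k => ?_
  rw [jacobiTheta₂_term, ← Complex.exp_add]
  ring_nf

theorem theta3_eq_jacobiTheta₂ (u τ : ℂ) : theta3 u τ = jacobiTheta₂ u τ :=
  tsum_congr fun k => by rw [jacobiTheta₂_term]; ring_nf

theorem theta4_eq_theta3 (u τ : ℂ) : theta4 u τ = theta3 (u + 1 / 2) τ := rfl

theorem theta2_add_one (u τ : ℂ) : theta2 (u + 1) τ = -theta2 u τ := by
  rw [theta2_eq_jacobiTheta₂, theta2_eq_jacobiTheta₂, add_right_comm u, jacobiTheta₂_add_left,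
    mul_add_one, ← add_assoc, Complex.exp_add, exp_pi_mul_I]
  ring

theorem theta2_neg (u τ : ℂ) : theta2 (-u) τ = theta2 u τ := by
  have shift := jacobiTheta₂_add_left' (u - τ / 2) τ
  rw [show u - τ / 2 + τ = u + τ / 2 by ring] at shift
  rw [theta2_eq_jacobiTheta₂, theta2_eq_jacobiTheta₂, shift, ← jacobiTheta₂_neg_left (-u + τ / 2),
    ← mul_assoc, ← Complex.exp_add]
  ring_nf

theorem theta1_add_half (u τ : ℂ) : theta1 (u + 1 / 2) τ = theta2 u τ := by
  rw [theta1_eq_neg_theta2, add_assoc, add_halves, theta2_add_one, neg_neg]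

theorem theta2_add_half (u τ : ℂ) : theta2 (u + 1 / 2) τ = -theta1 u τ := by
  rw [theta1_eq_neg_theta2, neg_neg]

theorem theta1_neg (u τ : ℂ) : theta1 (-u) τ = -theta1 u τ := by
  rw [theta1_eq_neg_theta2, ← theta2_neg, ← theta1_add_half]
  ring_nf

theorem theta1_zero (τ : ℂ) : theta1 0 τ = 0 :=
  Function.Odd.map_zero (f := (theta1 · τ)) fun u => theta1_neg u τ

section UpperHalfPlane

variable {τ : ℂ} (hτ : 0 < τ.im)
include hτ

theorem theta2_mul_sub_theta1_mul (a b : ℂ) :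
    theta2 a τ * theta2 b τ - theta1 a τ * theta1 b τ =
      2 * (theta2 (a + b) (2 * τ) * theta3 (a - b) (2 * τ)) := by
  have dup := jacobiTheta₂_mul_add_jacobiTheta₂_mul (a + τ / 2) (b + τ / 2) hτ
  rw [show a + τ / 2 + (b + τ / 2) = a + b + 2 * τ / 2 by ring, add_sub_add_right_eq_sub,
    add_right_comm a, add_right_comm b] at dup
  have exp_shift (z : ℂ) : cexp (π * I * τ / 4 + π * I * (z + 1 / 2)) =
      cexp (π * I * τ / 4 + π * I * z) * I := by
    rw [mul_add, ← add_assoc, Complex.exp_add, show π * I * (1 / 2) = π / 2 * I by ring,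
      exp_pi_div_two_mul_I]
  have exp_mul : cexp (π * I * τ / 4 + π * I * a) * cexp (π * I * τ / 4 + π * I * b) =
      cexp (π * I * (2 * τ) / 4 + π * I * (a + b)) := by
    rw [← Complex.exp_add]
    ring_nf
  simp only [theta1_eq_neg_theta2, theta3_eq_jacobiTheta₂, theta2_eq_jacobiTheta₂, exp_shift,
    ← exp_mul]
  linear_combination cexp (π * I * τ / 4 + π * I * a) * cexp (π * I * τ / 4 + π * I * b) * dup -
    cexp (π * I * τ / 4 + π * I * a) * cexp (π * I * τ / 4 + π * I * b) *
      jacobiTheta₂ (a + 1 / 2 + τ / 2) τ * jacobiTheta₂ (b + 1 / 2 + τ / 2) τ * I_sq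

theorem theta2_mul_add_theta1_mul (a b : ℂ) :
    theta2 a τ * theta2 b τ + theta1 a τ * theta1 b τ =
      2 * (theta2 (a - b) (2 * τ) * theta3 (a + b) (2 * τ)) := by
  simpa only [theta2_neg, theta1_neg, mul_neg, sub_neg_eq_add, ← sub_eq_add_neg] using
    theta2_mul_sub_theta1_mul hτ a (-b)

theorem two_mul_theta1_mul_theta4 (x y : ℂ) :
    2 * (theta1 (x + y) (2 * τ) * theta4 (x - y) (2 * τ)) =
      theta1 x τ * theta2 y τ + theta2 x τ * theta1 y τ := by
  have dup := theta2_mul_sub_theta1_mul hτ (x + 1 / 2) y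
  rw [theta2_add_half, theta1_add_half, add_right_comm, theta2_add_half, add_sub_right_comm,
    ← theta4_eq_theta3] at dup
  linear_combination dup

theorem theta1_add_mul_theta1_sub (x y : ℂ) :
    theta1 (x + y) τ * theta1 (x - y) τ * theta2 0 τ ^ 2 =
      theta1 x τ ^ 2 * theta2 y τ ^ 2 - theta2 x τ ^ 2 * theta1 y τ ^ 2 := by
  have theta1_mul (a b : ℂ) : theta1 a τ * theta1 b τ =
      theta2 (a - b) (2 * τ) * theta3 (a + b) (2 * τ) -
        theta2 (a + b) (2 * τ) * theta3 (a - b) (2 * τ) := by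
    linear_combination (theta2_mul_add_theta1_mul hτ a b - theta2_mul_sub_theta1_mul hτ a b) / 2
  have theta2_mul (a b : ℂ) : theta2 a τ * theta2 b τ =
      theta2 (a - b) (2 * τ) * theta3 (a + b) (2 * τ) +
        theta2 (a + b) (2 * τ) * theta3 (a - b) (2 * τ) := by
    linear_combination (theta2_mul_add_theta1_mul hτ a b + theta2_mul_sub_theta1_mul hτ a b) / 2
  simp only [sq, theta1_mul, theta2_mul, add_add_sub_cancel, add_sub_sub_cancel, sub_self,
    ← two_mul, mul_zero]
  ring

theorem differentiable_theta2 : Differentiable ℂ (theta2 · τ) := by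
  have h : Differentiable ℂ (jacobiTheta₂ · τ) := fun z => differentiableAt_jacobiTheta₂_fst z hτ
  simp only [theta2_eq_jacobiTheta₂]
  exact .mul (by fun_prop) (h.comp (f := (· + τ / 2)) (by fun_prop))

theorem differentiable_theta1 : Differentiable ℂ (theta1 · τ) :=
  ((differentiable_theta2 hτ).comp (f := (· + 1 / 2)) (by fun_prop)).neg

theorem differentiable_theta4 : Differentiable ℂ (theta4 · τ) := by
  simp only [theta4_eq_theta3, theta3_eq_jacobiTheta₂]
  exact fun u => (differentiableAt_jacobiTheta₂_fst _ hτ).comp (f := (· + 1 / 2)) u (by fun_prop)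

omit hτ in
theorem deriv_theta2_zero (τ : ℂ) : deriv (theta2 · τ) 0 = 0 :=
  (odd_deriv_of_even fun u => theta2_neg u τ).map_zero

theorem two_mul_theta1_mul_theta4_self (u : ℂ) :
    2 * (theta1 u (2 * τ) * theta4 u (2 * τ)) = theta1 u τ * theta2 0 τ := by
  simpa [theta1_zero] using two_mul_theta1_mul_theta4 hτ u 0

theorem two_mul_wronskian_theta1_theta4 (u : ℂ) :
    2 * (deriv (theta1 · (2 * τ)) u * theta4 u (2 * τ) -
        theta1 u (2 * τ) * deriv (theta4 · (2 * τ)) u) =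
      deriv (theta1 · τ) 0 * theta2 u τ := by
  have h2τ : 0 < (2 * τ).im := by simpa using hτ
  have hθ₁ := differentiable_theta1 hτ
  have hθ₂ := differentiable_theta2 hτ
  rw [← deriv_comp_add_mul_comp_sub (differentiable_theta1 h2τ u) (differentiable_theta4 h2τ u),
    ← deriv_const_mul_field, funext (two_mul_theta1_mul_theta4 hτ u),
    deriv_fun_add (by fun_prop) (by fun_prop), deriv_const_mul_field, deriv_const_mul_field,
    deriv_theta2_zero]
  ring

theorem wronskian_theta1_deriv_theta1 (u : ℂ) :
    (iteratedDeriv 2 (theta1 · τ) u * theta1 u τ - deriv (theta1 · τ) u ^ 2) * theta2 0 τ ^ 2 =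
      theta1 u τ ^ 2 * (theta2 0 τ * iteratedDeriv 2 (theta2 · τ) 0) -
        theta2 u τ ^ 2 * deriv (theta1 · τ) 0 ^ 2 := by
  have hθ₁ : ContDiff ℂ 2 (theta1 · τ) := (differentiable_theta1 hτ).contDiff
  have hθ₂ : ContDiff ℂ 2 (theta2 · τ) := (differentiable_theta2 hτ).contDiff
  have second_order := congrArg (iteratedDeriv 2 · 0) (funext (theta1_add_mul_theta1_sub hτ u))
  rw [iteratedDeriv_mul_const_field, iteratedDeriv_two_comp_add_mul_comp_sub hθ₁,
    iteratedDeriv_fun_sub (by fun_prop) (by fun_prop), iteratedDeriv_const_mul_field,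
    iteratedDeriv_const_mul_field, iteratedDeriv_two_fun_sq hθ₁.contDiffAt,
    iteratedDeriv_two_fun_sq hθ₂.contDiffAt, theta1_zero, deriv_theta2_zero] at second_order
  linear_combination second_order / 2

theorem Sp_two_mul {u : ℂ} (hu : theta1 u (2 * τ) * theta4 u (2 * τ) ≠ 0) :
    Sp u (2 * τ) = deriv (theta1 · τ) 0 / theta2 0 τ * (theta2 u τ / theta1 u τ) := by
  rw [Sp, zeta1, zeta4, div_sub_div _ _ (left_ne_zero_of_mul hu) (right_ne_zero_of_mul hu),
    ← mul_div_mul_left _ _ two_ne_zero, two_mul_wronskian_theta1_theta4 hτ,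
    two_mul_theta1_mul_theta4_self hτ, mul_comm (theta1 u τ), mul_div_mul_comm]

theorem wp1_eq {u : ℂ} (hθ₂ : theta2 0 τ ≠ 0) (hu : theta1 u τ ≠ 0) :
    wp1 u τ = (deriv (theta1 · τ) 0 / theta2 0 τ * (theta2 u τ / theta1 u τ)) ^ 2 -
      iteratedDeriv 2 (theta2 · τ) 0 / theta2 0 τ := by
  have hθ₁ := differentiable_theta1 hτ
  have hlog : wp1 u τ = -deriv (logDeriv (theta1 · τ)) u := rfl
  rw [hlog, deriv_logDeriv (hθ₁ u) (hθ₁.deriv u) hu]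
  field_simp
  linear_combination -wronskian_theta1_deriv_theta1 hτ u

theorem Sp_sq {u : ℂ} (hu : theta1 u (2 * τ) * theta4 u (2 * τ) ≠ 0) :
    Sp u (2 * τ) ^ 2 = wp1 u τ + iteratedDeriv 2 (theta2 · τ) 0 / theta2 0 τ := by
  have hτu : theta1 u τ * theta2 0 τ ≠ 0 := by
    rw [← two_mul_theta1_mul_theta4_self hτ]
    exact mul_ne_zero two_ne_zero hu
  rw [Sp_two_mul hτ hu, wp1_eq hτ (right_ne_zero_of_mul hτu) (left_ne_zero_of_mul hτu),
    sub_add_cancel]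

theorem differentiableAt_Sp {u : ℂ} (hu : theta1 u τ * theta4 u τ ≠ 0) :
    DifferentiableAt ℂ (Sp · τ) u := by
  have hθ₁ := differentiable_theta1 hτ
  have hθ₄ := differentiable_theta4 hτ
  exact ((hθ₁.deriv u).fun_div (hθ₁ u) (left_ne_zero_of_mul hu)).fun_sub
    ((hθ₄.deriv u).fun_div (hθ₄ u) (right_ne_zero_of_mul hu))

end UpperHalfPlane

/-- Product identity for S' and S'' (formula (n6)): S'(u,τ)·S''(u,τ) = ℘₁'(u,τ/2)/2. -/
theorem Sp_mul_Spp (τ u : ℂ) (hτ : 0 < τ.im)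
    (h1 : theta1 u τ * theta4 u τ ≠ 0)
    (h2 : theta1 u (τ / 2) ≠ 0) :
    Sp u τ * Spp u τ = (1 / 2) * wp1' u (τ / 2) := by
  obtain ⟨σ, rfl⟩ : ∃ σ, τ = 2 * σ := ⟨τ / 2, by ring⟩
  rw [mul_div_cancel_left₀ σ two_ne_zero]
  have hσ : 0 < σ.im := by simpa using hτ
  have h_near : ∀ᶠ v in 𝓝 u, theta1 v (2 * σ) * theta4 v (2 * σ) ≠ 0 :=
    ((differentiable_theta1 hτ).continuous.mul
      (differentiable_theta4 hτ).continuous).continuousAt.eventually_ne h1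
  have h_sq : (fun v => Sp v (2 * σ) ^ 2) =ᶠ[𝓝 u]
      fun v => wp1 v σ + iteratedDeriv 2 (theta2 · σ) 0 / theta2 0 σ :=
    h_near.mono fun _ => Sp_sq hσ
  have h_deriv : deriv (fun v => Sp v (2 * σ) ^ 2) u = wp1' u σ := by
    rw [h_sq.deriv_eq, deriv_add_const, wp1']
  rw [← h_deriv, deriv_fun_pow (differentiableAt_Sp hτ h1), ← Spp]
  push_cast
  ring
end

section
/- The elliptic curve of the dispersionless DKP hierarchy (equation (D5)): Let Ω ⊆ ℂ, let p, w : Ω → ℂ with w(z) ≠ 0 for all z ∈ Ω, let A : {(z,ζ) ∈ Ω×Ω : z ≠ ζ} → ℂ with A(z,ζ) ≠ 0 everywhere, and let c ∈ ℂ. Suppose that for all z, ζ ∈ Ω with z ≠ ζ the two relations hold: A(z,ζ)·(1 − 1/(w(z)w(ζ))) = (p(z) − p(ζ))/(z − ζ) and c²·A(z,ζ)⁻¹·(w(z) − w(ζ))/(z − ζ) = p(z) + p(ζ). Then the function z ↦ p(z)² − c²·(w(z) + 1/w(z)) is constant on Ω; i.e., there exists V ∈ ℂ such that p(z)² = c²(w(z)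 + w(z)⁻¹) + V for all z ∈ Ω, so (p(z), w(z)) lies on a fixed elliptic curve. -/
/-!
Multiplying the two relations cancels `A(z, ζ)` and leaves
`p(z)² - p(ζ)² = c² (w(z) - w(ζ)) (1 - 1 / (w(z) w(ζ)))`, whose right-hand side separates as
`c² (w(z) + w(z)⁻¹) - c² (w(ζ) + w(ζ)⁻¹)`.
-/

section Field

variable {K : Type*} [Field K]

theorem sub_mul_one_sub_one_div_mul {u v : K} (hu : u ≠ 0) (hv : v ≠ 0) :
    (u - v) * (1 - 1 / (u * v)) = (u + u⁻¹) - (v + v⁻¹) := by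
  field_simp
  ring

theorem sq_sub_sq_of_dDKP_relations {a d k p q u v : K} (ha : a ≠ 0) (hd : d ≠ 0)
    (hu : u ≠ 0) (hv : v ≠ 0)
    (hsub : a * (1 - 1 / (u * v)) = (p - q) / d) (hadd : k * a⁻¹ * ((u - v) / d) = p + q) :
    p ^ 2 - q ^ 2 = k * ((u + u⁻¹) - (v + v⁻¹)) :=
  calc
    p ^ 2 - q ^ 2 = (p + q) * ((p - q) / d * d) := by rw [div_mul_cancel₀ _ hd, sq_sub_sq]
    _ = k * (a⁻¹ * a) * ((u - v) / d * d) * (1 - 1 / (u * v)) := by rw [← hadd, ← hsub]; ring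
    _ = k * ((u - v) * (1 - 1 / (u * v))) := by
      rw [inv_mul_cancel₀ ha, div_mul_cancel₀ _ hd, mul_one, mul_assoc]
    _ = k * ((u + u⁻¹) - (v + v⁻¹)) := by rw [sub_mul_one_sub_one_div_mul hu hv]

theorem dDKP_elliptic_curve_general (Ω : Set K) (p w : K → K) (A : K → K → K) (k : K)
    (hw : ∀ z ∈ Ω, w z ≠ 0)
    (hA : ∀ z ∈ Ω, ∀ ζ ∈ Ω, z ≠ ζ → A z ζ ≠ 0)
    (hsub : ∀ z ∈ Ω, ∀ ζ ∈ Ω, z ≠ ζ →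
      A z ζ * (1 - 1 / (w z * w ζ)) = (p z - p ζ) / (z - ζ))
    (hadd : ∀ z ∈ Ω, ∀ ζ ∈ Ω, z ≠ ζ →
      k * (A z ζ)⁻¹ * ((w z - w ζ) / (z - ζ)) = p z + p ζ) :
    ∃ V : K, ∀ z ∈ Ω, p z ^ 2 = k * (w z + (w z)⁻¹) + V := by
  have invariant_eq :
      Ω.Pairwise fun z ζ ↦
        p z ^ 2 - k * (w z + (w z)⁻¹) = p ζ ^ 2 - k * (w ζ + (w ζ)⁻¹) := by
    intro z hz ζ hζ hne
    have hsq := sq_sub_sq_of_dDKP_relations (hA z hz ζ hζ hne) (sub_ne_zero.mpr hne)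
      (hw z hz) (hw ζ hζ) (hsub z hz ζ hζ hne) (hadd z hz ζ hζ hne)
    linear_combination hsq
  obtain ⟨V, hV⟩ :=
    (Set.pairwise_eq_iff_exists_eq Ω fun z ↦ p z ^ 2 - k * (w z + (w z)⁻¹)).mp invariant_eq
  exact ⟨V, fun z hz ↦ sub_eq_iff_eq_add'.mp (hV z hz)⟩

end Field

/-- The elliptic curve of the dispersionless DKP hierarchy (equation (D5)):
the two dDKP relations force `p(z)² − c²(w(z) + w(z)⁻¹)` to be constant on Ω,
so `(p(z), w(z))` lies on a fixed elliptic curve `p² = c²(w + w⁻¹) + V`. -/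
theorem dDKP_elliptic_curve
    (Ω : Set ℂ) (p w : ℂ → ℂ) (A : ℂ → ℂ → ℂ) (c : ℂ)
    (hw : ∀ z ∈ Ω, w z ≠ 0)
    (hA : ∀ z ∈ Ω, ∀ ζ ∈ Ω, z ≠ ζ → A z ζ ≠ 0)
    (h1 : ∀ z ∈ Ω, ∀ ζ ∈ Ω, z ≠ ζ →
      A z ζ * (1 - 1 / (w z * w ζ)) = (p z - p ζ) / (z - ζ))
    (h2 : ∀ z ∈ Ω, ∀ ζ ∈ Ω, z ≠ ζ →
      c ^ 2 * (A z ζ)⁻¹ * ((w z - w ζ) / (z - ζ)) = p z + p ζ) :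
    ∃ V : ℂ, ∀ z ∈ Ω, p z ^ 2 = c ^ 2 * (w z + (w z)⁻¹) + V :=
  dDKP_elliptic_curve_general Ω p w A (c ^ 2) hw hA h1 h2
end
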